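/- arXiv:1704.04191 — 2 statements merged into one kernel-verified Lean document; each statement's English description precedes it below -/
import Mathlib

section
/- Let F : ℝⁿ ⇉ ℝᵐ be a set-valued map whose graph is locally closed at (x̄, ȳ) ∈ gph F. Then F is strongly metrically subregular at x̄ for ȳ if and only if DF(x̄|ȳ)⁻¹(0) = {0}, which is equivalent to |DF(x̄|ȳ)⁻¹|⁺ < ∞; and in that case subreg(F; x̄|ȳ) = |DF(x̄|ȳ)⁻¹|⁺. -/
open Filter Topology Set Metric RealInnerProductSpace
open scoped ENNReal NNReal Pointwise

noncomputable section

/-- Graph of a set-valued map. -/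
def svGraph {α β : Type*} (F : α → Set β) : Set (α × β) := {p | p.2 ∈ F p.1}

/-- Inverse of a set-valued map. -/
def svInv {α β : Type*} (F : α → Set β) : β → Set α := fun y => {x | y ∈ F x}

/-- Local closedness of a set at a point of a metric space. -/
def LocClosedAt {α : Type*} [PseudoMetricSpace α] (s : Set α) (p : α) : Prop :=
  ∃ r : ℝ, 0 < r ∧ IsClosed (s ∩ Metric.closedBall p r)

section Cones

variable {X : Type*} [NormedAddCommGroup X] [NormedSpace ℝ X]

/-- Bouligand-Severi contingent cone. -/
def contingentCone (Ω : Set X) (x : X) : Set X :=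
  { u | ∃ (t : ℕ → ℝ) (uk : ℕ → X), (∀ k, 0 < t k) ∧
      Tendsto t atTop (𝓝 0) ∧ Tendsto uk atTop (𝓝 u) ∧ ∀ k, x + t k • uk k ∈ Ω }

/-- Bouligand paratingent cone. -/
def paratingentCone (Ω : Set X) (x : X) : Set X :=
  { u | ∃ (t : ℕ → ℝ) (uk : ℕ → X) (xk : ℕ → X), (∀ k, 0 < t k) ∧
      Tendsto t atTop (𝓝 0) ∧ Tendsto uk atTop (𝓝 u) ∧
      (∀ k, xk k ∈ Ω) ∧ Tendsto xk atTop (𝓝 x) ∧ ∀ k, xk k + t k • uk k ∈ Ω }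

end Cones

section NormalCones

variable {X : Type*} [NormedAddCommGroup X] [InnerProductSpace ℝ X]

/-- Fréchet (regular) normal cone. -/
def frechetNormalCone (Ω : Set X) (x : X) : Set X :=
  { v | ∀ ε : ℝ, 0 < ε → ∃ δ : ℝ, 0 < δ ∧ ∀ y ∈ Ω, ‖y - x‖ < δ →
      ⟪v, y - x⟫ ≤ ε * ‖y - x‖ }

/-- Limiting (Mordukhovich) normal cone. -/
def limitingNormalCone (Ω : Set X) (x : X) : Set X :=
  { v | ∃ (xk : ℕ → X) (vk : ℕ → X), (∀ k, xk k ∈ Ω) ∧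
      Tendsto xk atTop (𝓝 x) ∧ Tendsto vk atTop (𝓝 v) ∧
      ∀ k, vk k ∈ frechetNormalCone Ω (xk k) }

end NormalCones

section Derivatives

variable {E F : Type*} [NormedAddCommGroup E] [NormedSpace ℝ E]
  [NormedAddCommGroup F] [NormedSpace ℝ F]

/-- Graphical derivative. -/
def gDeriv (Fm : E → Set F) (x : E) (y : F) : E → Set F := fun u =>
  {v | (u, v) ∈ contingentCone (svGraph Fm) (x, y)}

/-- Strict graphical derivative. -/
def sgDeriv (Fm : E → Set F) (x : E) (y : F) : E → Set F := fun u =>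
  {v | (u, v) ∈ paratingentCone (svGraph Fm) (x, y)}

end Derivatives

section Coderivative

variable {E F : Type*} [NormedAddCommGroup E] [InnerProductSpace ℝ E]
  [NormedAddCommGroup F] [InnerProductSpace ℝ F]

/-- Coderivative: `w ∈ D*F(x|y)(z)` iff `(w, -z)` is in the limiting normal cone
to the graph of `F` (viewed inside the `ℓ²` product) at `(x, y)`. -/
def coDeriv (Fm : E → Set F) (x : E) (y : F) : F → Set E := fun z =>
  { w | (WithLp.equiv 2 (E × F)).symm (w, -z) ∈
      limitingNormalCone ((WithLp.equiv 2 (E × F)).symm '' svGraph Fm)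
        ((WithLp.equiv 2 (E × F)).symm (x, y)) }

end Coderivative

section Norms

variable {E F : Type*} [NormedAddCommGroup E] [NormedAddCommGroup F]

/-- Outer norm of a (positively homogeneous) set-valued map. -/
def outerNormSV (H : E → Set F) : ℝ≥0∞ :=
  ⨆ (x : E) (_ : ‖x‖ ≤ 1) (y : F) (_ : y ∈ H x), (‖y‖₊ : ℝ≥0∞)

/-- Inner norm of a (positively homogeneous) set-valued map. -/
def innerNormSV (H : E → Set F) : ℝ≥0∞ :=
  ⨆ (x : E) (_ : ‖x‖ ≤ 1), ⨅ (y : F) (_ : y ∈ H x), (‖y‖₊ : ℝ≥0∞)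

/-- Positive homogeneity of a set-valued map. -/
def PosHomogeneous {E F : Type*} [NormedAddCommGroup E] [NormedSpace ℝ E]
    [NormedAddCommGroup F] [NormedSpace ℝ F] (H : E → Set F) : Prop :=
  (0 : F) ∈ H 0 ∧ ∀ (c : ℝ), 0 < c → ∀ x, H (c • x) = c • (H x)

end Norms

section Stability

variable {E F : Type*} [NormedAddCommGroup E] [NormedAddCommGroup F]

/-- Metric regularity with constant `κ`. -/
def MetrRegWith (κ : ℝ≥0) (Fm : E → Set F) (xbar : E) (ybar : F) : Prop :=
  ∃ U ∈ 𝓝 xbar, ∃ V ∈ 𝓝 ybar, ∀ x ∈ U, ∀ y ∈ V,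
    EMetric.infEdist x (svInv Fm y) ≤ (κ : ℝ≥0∞) * EMetric.infEdist y (Fm x)

/-- The regularity modulus `reg (F; xbar|ybar)`. -/
def regMod (Fm : E → Set F) (xbar : E) (ybar : F) : ℝ≥0∞ :=
  ⨅ (κ : ℝ≥0) (_ : MetrRegWith κ Fm xbar ybar), (κ : ℝ≥0∞)

/-- Aubin property with constant `κ`. -/
def AubinWith (κ : ℝ≥0) (S : F → Set E) (ybar : F) (xbar : E) : Prop :=
  ∃ V ∈ 𝓝 ybar, ∃ U ∈ 𝓝 xbar, ∀ y ∈ V, ∀ y' ∈ V, ∀ x ∈ S y' ∩ U,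
    ∃ x' ∈ S y, ‖x - x'‖ ≤ (κ : ℝ) * ‖y - y'‖

/-- The Lipschitz modulus `lip (S; ybar|xbar)`. -/
def lipMod (S : F → Set E) (ybar : F) (xbar : E) : ℝ≥0∞ :=
  ⨅ (κ : ℝ≥0) (_ : AubinWith κ S ybar xbar), (κ : ℝ≥0∞)

/-- Strong metric subregularity with constant `κ`. -/
def SubregWith (κ : ℝ≥0) (Fm : E → Set F) (xbar : E) (ybar : F) : Prop :=
  ∃ U ∈ 𝓝 xbar, ∀ x ∈ U, (‖x - xbar‖₊ : ℝ≥0∞) ≤ (κ : ℝ≥0∞) * EMetric.infEdist ybar (Fm x)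

/-- The subregularity modulus `subreg (F; xbar|ybar)`. -/
def subregMod (Fm : E → Set F) (xbar : E) (ybar : F) : ℝ≥0∞ :=
  ⨅ (κ : ℝ≥0) (_ : SubregWith κ Fm xbar ybar), (κ : ℝ≥0∞)

/-- Isolated calmness with constant `κ`. -/
def CalmWith (κ : ℝ≥0) (S : F → Set E) (ybar : F) (xbar : E) : Prop :=
  ∃ V ∈ 𝓝 ybar, ∃ U ∈ 𝓝 xbar, ∀ y ∈ V, ∀ x ∈ S y ∩ U, ‖x - xbar‖ ≤ (κ : ℝ) * ‖y - ybar‖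

/-- The calmness modulus `clm (S; ybar|xbar)`. -/
def clmMod (S : F → Set E) (ybar : F) (xbar : E) : ℝ≥0∞ :=
  ⨅ (κ : ℝ≥0) (_ : CalmWith κ S ybar xbar), (κ : ℝ≥0∞)

/-- Strong metric regularity: metric regularity plus a single-valued localization
of the inverse. -/
def StrongMetrReg (Fm : E → Set F) (xbar : E) (ybar : F) : Prop :=
  (∃ κ : ℝ≥0, MetrRegWith κ Fm xbar ybar) ∧
  ∃ U ∈ 𝓝 xbar, ∃ V ∈ 𝓝 ybar, ∀ y ∈ V, (svInv Fm y ∩ U).Subsingleton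

end Stability

/-!
If `SubregWith κ` fails, there are graph points `(xₖ, yₖ)` with `xₖ → xbar`, `xₖ ≠ xbar` and
`‖yₖ - ybar‖ ≤ κ⁻¹ ‖xₖ - xbar‖`. Dividing by `‖xₖ - xbar‖` and using compactness of the unit sphere
and of closed balls, one obtains in the limit some `v ∈ DF(xbar|ybar)(u)` with `‖u‖ = 1` and
`‖v‖ ≤ κ⁻¹`; if `SubregWith κ` fails for all `κ`, one can reach `v = 0`. Conversely, the estimate
`‖x - xbar‖ ≤ κ ‖y - ybar‖` on the graph passes to tangent directions as `‖u‖ ≤ κ ‖v‖`, and by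
positive homogeneity this says precisely that the outer norm of the inverse of `DF(xbar|ybar)` is
at most `κ`.
-/

section PositiveHomogeneity

variable {E F : Type*} [NormedAddCommGroup E] [NormedSpace ℝ E]
  [NormedAddCommGroup F] [NormedSpace ℝ F]

lemma posHomogeneous_svInv {H : E → Set F} (hH : PosHomogeneous H) : PosHomogeneous (svInv H) := by
  refine ⟨hH.1, fun c hc y => ext fun x => ?_⟩
  rw [mem_smul_set_iff_inv_smul_mem₀ hc.ne']
  change c • y ∈ H x ↔ y ∈ H (c⁻¹ • x)
  rw [hH.2 c⁻¹ (inv_pos.2 hc), mem_smul_set_iff_inv_smul_mem₀ (inv_ne_zero hc.ne'), inv_inv]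

lemma PosHomogeneous.outerNormSV_le_iff {H : E → Set F} (hH : PosHomogeneous H) {κ : ℝ≥0} :
    outerNormSV H ≤ κ ↔ ∀ x, ∀ y ∈ H x, ‖y‖ ≤ κ * ‖x‖ := by
  have hunit : outerNormSV H ≤ κ ↔ ∀ x, ‖x‖ ≤ 1 → ∀ y ∈ H x, ‖y‖ ≤ κ := by
    simp only [outerNormSV, iSup_le_iff, ENNReal.coe_le_coe, ← NNReal.coe_le_coe, coe_nnnorm]
  rw [hunit]
  refine ⟨fun h x y hy => ?_, fun h x hx y hy =>
    (h x y hy).trans (mul_le_of_le_one_right κ.coe_nonneg hx)⟩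
  -- Rescaling by `r > ‖x‖` instead of by `‖x‖` also covers `x = 0`.
  refine le_mul_of_forall_lt₀ fun a ha r hr => ?_
  have hr0 : 0 < r := (norm_nonneg x).trans_lt hr
  have hx : ‖r⁻¹ • x‖ ≤ 1 := by
    rw [norm_smul, Real.norm_of_nonneg (inv_nonneg.2 hr0.le), inv_mul_le_one₀ hr0]
    exact hr.le
  have hry : r⁻¹ • y ∈ H (r⁻¹ • x) := by
    rw [hH.2 _ (inv_pos.2 hr0)]
    exact smul_mem_smul_set hy
  have hle := h _ hx _ hry
  rw [norm_smul, Real.norm_of_nonneg (inv_nonneg.2 hr0.le), inv_mul_le_iff₀' hr0] at hle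
  exact hle.trans (mul_le_mul_of_nonneg_right ha.le hr0.le)

lemma PosHomogeneous.apply_zero_eq_singleton {H : E → Set F} (hH : PosHomogeneous H)
    (hfin : outerNormSV H < ⊤) : H 0 = {0} := by
  obtain ⟨κ, hκ, -⟩ := ENNReal.lt_iff_exists_nnreal_btwn.1 hfin
  refine Subset.antisymm (fun y hy => ?_) (singleton_subset_iff.2 hH.1)
  simpa using hH.outerNormSV_le_iff.1 hκ.le 0 y hy

end PositiveHomogeneity

section ContingentCone

variable {E F : Type*} [NormedAddCommGroup E] [NormedSpace ℝ E]
  [NormedAddCommGroup F] [NormedSpace ℝ F]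

lemma smul_mem_contingentCone {Ω : Set E} {x u : E} (hu : u ∈ contingentCone Ω x)
    {c : ℝ} (hc : 0 < c) : c • u ∈ contingentCone Ω x := by
  obtain ⟨t, uk, ht, ht0, huk, hmem⟩ := hu
  refine ⟨fun k => t k / c, fun k => c • uk k, fun k => div_pos (ht k) hc, ?_,
    huk.const_smul c, fun k => ?_⟩
  · simpa using ht0.div_const c
  · rw [smul_smul, div_mul_cancel₀ _ hc.ne']
    exact hmem k

lemma zero_mem_contingentCone {Ω : Set E} {x : E} (hx : x ∈ Ω) : 0 ∈ contingentCone Ω x :=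
  ⟨fun k => 1 / ((k : ℝ) + 1), fun _ => 0, fun _ => Nat.one_div_pos_of_nat,
    tendsto_one_div_add_atTop_nhds_zero_nat, tendsto_const_nhds, fun _ => by simpa using hx⟩

lemma mem_contingentCone_of_tendsto {Ω : Set E} {x u : E} {p : ℕ → E} {t : ℕ → ℝ}
    (hp : ∀ k, p k ∈ Ω) (ht : ∀ k, 0 < t k) (ht0 : Tendsto t atTop (𝓝 0))
    (hu : Tendsto (fun k => (t k)⁻¹ • (p k - x)) atTop (𝓝 u)) : u ∈ contingentCone Ω x :=
  ⟨t, _, ht, ht0, hu, fun k => by simpa [smul_inv_smul₀ (ht k).ne'] using hp k⟩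

lemma posHomogeneous_gDeriv {Fm : E → Set F} {xbar : E} {ybar : F} (hgr : ybar ∈ Fm xbar) :
    PosHomogeneous (gDeriv Fm xbar ybar) := by
  refine ⟨zero_mem_contingentCone (Ω := svGraph Fm) (x := (xbar, ybar)) hgr,
    fun c hc u => ext fun v => ?_⟩
  rw [mem_smul_set_iff_inv_smul_mem₀ hc.ne']
  refine ⟨fun hv => ?_, fun hv => ?_⟩
  · simpa [gDeriv, inv_smul_smul₀ hc.ne'] using smul_mem_contingentCone hv (inv_pos.2 hc)
  · simpa [gDeriv, smul_inv_smul₀ hc.ne'] using smul_mem_contingentCone hv hc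

lemma exists_norm_eq_one_mem_gDeriv [ProperSpace E] {Fm : E → Set F} {xbar : E} {ybar v : F}
    {x : ℕ → E} {y : ℕ → F} (hy : ∀ k, y k ∈ Fm (x k)) (hne : ∀ k, x k ≠ xbar)
    (hx : Tendsto x atTop (𝓝 xbar))
    (hv : Tendsto (fun k => ‖x k - xbar‖⁻¹ • (y k - ybar)) atTop (𝓝 v)) :
    ∃ u, ‖u‖ = 1 ∧ v ∈ gDeriv Fm xbar ybar u := by
  have hpos : ∀ k, 0 < ‖x k - xbar‖ := fun k => norm_sub_pos_iff.2 (hne k)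
  have hsphere : ∀ k, ‖x k - xbar‖⁻¹ • (x k - xbar) ∈ sphere (0 : E) 1 := fun k => by
    simp [norm_smul, (hpos k).ne']
  obtain ⟨u, hu, φ, hφ, hlim⟩ := (isCompact_sphere (0 : E) 1).tendsto_subseq hsphere
  have hx0 : Tendsto (fun k => ‖x (φ k) - xbar‖) atTop (𝓝 0) :=
    (tendsto_iff_norm_sub_tendsto_zero.1 hx).comp hφ.tendsto_atTop
  exact ⟨u, mem_sphere_zero_iff_norm.1 hu,
    mem_contingentCone_of_tendsto (Ω := svGraph Fm) (p := fun k => (x (φ k), y (φ k)))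
      (fun k => hy (φ k)) (fun k => hpos (φ k)) hx0
      (hlim.prodMk_nhds (hv.comp hφ.tendsto_atTop))⟩

end ContingentCone

section StrongSubregularity

variable {E F : Type*} [NormedAddCommGroup E] [NormedAddCommGroup F]
  {Fm : E → Set F} {xbar : E} {ybar : F} {κ : ℝ≥0}

lemma SubregWith.eventually_norm_le (h : SubregWith κ Fm xbar ybar) :
    ∀ᶠ x in 𝓝 xbar, ∀ y ∈ Fm x, ‖x - xbar‖ ≤ κ * ‖y - ybar‖ := by
  obtain ⟨U, hU, h⟩ := h
  filter_upwards [hU] with x hx y hy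
  have hle : (‖x - xbar‖₊ : ℝ≥0∞) ≤ κ * ‖y - ybar‖₊ := by
    refine (h x hx).trans ?_
    gcongr
    refine (infEDist_le_edist_of_mem hy).trans_eq ?_
    rw [edist_comm, edist_eq_enorm_sub, enorm_eq_nnnorm]
  exact_mod_cast hle

/-- Pitfall at `κ = 0`: since `infEDist ybar ∅ = ⊤` and `0 * ⊤ = 0`, the property `SubregWith 0`
fails if `Fm` has empty values at points `x ≠ xbar` arbitrarily close to `xbar`. -/
lemma subregWith_of_eventually_norm_le (hκ : 0 < κ)
    (h : ∀ᶠ x in 𝓝 xbar, ∀ y ∈ Fm x, ‖x - xbar‖ ≤ κ * ‖y - ybar‖) :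
    SubregWith κ Fm xbar ybar := by
  refine ⟨_, h, fun x hx => ?_⟩
  have hκ0 : (κ : ℝ≥0∞) ≠ 0 := by exact_mod_cast hκ.ne'
  rw [← ENNReal.div_le_iff' hκ0 ENNReal.coe_ne_top]
  refine le_infEDist.2 fun y hy => ?_
  rw [ENNReal.div_le_iff' hκ0 ENNReal.coe_ne_top, edist_comm, edist_eq_enorm_sub,
    enorm_eq_nnnorm]
  have hle : ‖x - xbar‖₊ ≤ κ * ‖y - ybar‖₊ := hx y hy
  exact_mod_cast hle

variable [NormedSpace ℝ F]

lemma exists_seq_of_not_subregWith {κ : ℕ → ℝ≥0} (hκ : ∀ k, 0 < κ k)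
    (h : ∀ k, ¬ SubregWith (κ k) Fm xbar ybar) :
    ∃ (x : ℕ → E) (y : ℕ → F), (∀ k, y k ∈ Fm (x k)) ∧ (∀ k, x k ≠ xbar) ∧
      Tendsto x atTop (𝓝 xbar) ∧
      ∀ k, ‖‖x k - xbar‖⁻¹ • (y k - ybar)‖ ≤ (κ k : ℝ)⁻¹ := by
  have hex : ∀ k : ℕ, ∃ x, (∃ y ∈ Fm x, κ k * ‖y - ybar‖ < ‖x - xbar‖) ∧
      x ∈ ball xbar (1 / ((k : ℝ) + 1)) := fun k => by
    have hfreq : ∃ᶠ x in 𝓝 xbar, ∃ y ∈ Fm x, κ k * ‖y - ybar‖ < ‖x - xbar‖ := by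
      simpa using mt (subregWith_of_eventually_norm_le (hκ k)) (h k)
    exact (hfreq.and_eventually (ball_mem_nhds xbar Nat.one_div_pos_of_nat)).exists
  choose x hxy hx using hex
  choose y hy hlt using hxy
  have hpos : ∀ k, 0 < ‖x k - xbar‖ := fun k => lt_of_le_of_lt (by positivity) (hlt k)
  refine ⟨x, y, hy, fun k => norm_sub_pos_iff.1 (hpos k),
    tendsto_iff_dist_tendsto_zero.2 (squeeze_zero (fun _ => dist_nonneg) (fun k => (hx k).le)
      tendsto_one_div_add_atTop_nhds_zero_nat), fun k => ?_⟩
  have hκk : (0 : ℝ) < κ k := hκ k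
  rw [norm_smul, norm_inv, norm_norm, inv_mul_le_iff₀ (hpos k), ← div_eq_mul_inv,
    le_div_iff₀' hκk]
  exact (hlt k).le

variable [NormedSpace ℝ E]

lemma SubregWith.norm_le_of_mem_gDeriv {u : E} {v : F} (h : SubregWith κ Fm xbar ybar)
    (huv : v ∈ gDeriv Fm xbar ybar u) : ‖u‖ ≤ κ * ‖v‖ := by
  obtain ⟨t, w, ht, ht0, hw, hmem⟩ := huv
  have hu : Tendsto (fun k => (w k).1) atTop (𝓝 u) := hw.fst_nhds
  have hv : Tendsto (fun k => (w k).2) atTop (𝓝 v) := hw.snd_nhds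
  have hx : Tendsto (fun k => xbar + t k • (w k).1) atTop (𝓝 xbar) := by
    simpa using (ht0.smul hu).const_add xbar
  refine le_of_tendsto_of_tendsto hu.norm (hv.norm.const_mul (κ : ℝ)) ?_
  filter_upwards [hx.eventually h.eventually_norm_le] with k hk
  have hle := hk _ (hmem k)
  simp only [Prod.snd_add, Prod.smul_snd, add_sub_cancel_left, norm_smul,
    Real.norm_of_nonneg (ht k).le] at hle
  rw [mul_left_comm] at hle
  exact le_of_mul_le_mul_left hle (ht k)

lemma SubregWith.outerNormSV_le (hgr : ybar ∈ Fm xbar) (h : SubregWith κ Fm xbar ybar) :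
    outerNormSV (svInv (gDeriv Fm xbar ybar)) ≤ κ :=
  (posHomogeneous_svInv (posHomogeneous_gDeriv hgr)).outerNormSV_le_iff.2
    fun _ _ hu => h.norm_le_of_mem_gDeriv hu

lemma exists_subregWith_of_svInv_gDeriv_zero_eq [ProperSpace E]
    (h : svInv (gDeriv Fm xbar ybar) 0 = {0}) : ∃ κ : ℝ≥0, SubregWith κ Fm xbar ybar := by
  by_contra! hnot
  obtain ⟨x, y, hy, hne, hx, hle⟩ := exists_seq_of_not_subregWith
    (κ := fun k : ℕ => (k : ℝ≥0) + 1) (fun k => by positivity) fun k => hnot _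
  have hv : Tendsto (fun k => ‖x k - xbar‖⁻¹ • (y k - ybar)) atTop (𝓝 0) :=
    squeeze_zero_norm hle (by simpa using tendsto_one_div_add_atTop_nhds_zero_nat (𝕜 := ℝ))
  obtain ⟨u, hu, hu0⟩ := exists_norm_eq_one_mem_gDeriv hy hne hx hv
  obtain rfl : u = 0 := h.subset hu0
  simp at hu

lemma exists_mem_gDeriv_of_not_subregWith [ProperSpace E] [ProperSpace F] (hκ : 0 < κ)
    (h : ¬ SubregWith κ Fm xbar ybar) :
    ∃ u v, v ∈ gDeriv Fm xbar ybar u ∧ ‖u‖ = 1 ∧ ‖v‖ ≤ (κ : ℝ)⁻¹ := by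
  obtain ⟨x, y, hy, hne, hx, hle⟩ := exists_seq_of_not_subregWith (fun _ => hκ) fun _ => h
  obtain ⟨v, hv, φ, hφ, hlim⟩ := (isCompact_closedBall (0 : F) (κ : ℝ)⁻¹).tendsto_subseq
    fun k => mem_closedBall_zero_iff.2 (hle k)
  obtain ⟨u, hu, huv⟩ := exists_norm_eq_one_mem_gDeriv (fun k => hy (φ k)) (fun k => hne (φ k))
    (hx.comp hφ.tendsto_atTop) hlim
  exact ⟨u, v, huv, hu, mem_closedBall_zero_iff.1 hv⟩

lemma subregWith_of_outerNormSV_lt [ProperSpace E] [ProperSpace F] (hgr : ybar ∈ Fm xbar)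
    (h : outerNormSV (svInv (gDeriv Fm xbar ybar)) < κ) : SubregWith κ Fm xbar ybar := by
  by_contra hnot
  have hκ : 0 < κ := by exact_mod_cast pos_of_gt h
  obtain ⟨u, v, huv, hu, hv⟩ := exists_mem_gDeriv_of_not_subregWith hκ hnot
  obtain ⟨κ', hκ', hlt⟩ := ENNReal.lt_iff_exists_nnreal_btwn.1 h
  have hle : ‖u‖ ≤ κ' * ‖v‖ :=
    (posHomogeneous_svInv (posHomogeneous_gDeriv hgr)).outerNormSV_le_iff.1 hκ'.le v u huv
  have hlt' : (κ' : ℝ) < κ := by exact_mod_cast hlt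
  refine lt_irrefl (1 : ℝ) ?_
  calc (1 : ℝ) = ‖u‖ := hu.symm
    _ ≤ κ' * ‖v‖ := hle
    _ ≤ κ' * (κ : ℝ)⁻¹ := mul_le_mul_of_nonneg_left hv κ'.coe_nonneg
    _ < 1 := by rwa [← div_eq_mul_inv, div_lt_one (NNReal.coe_pos.2 hκ)]

lemma subregMod_eq_outerNormSV [ProperSpace E] [ProperSpace F] (hgr : ybar ∈ Fm xbar) :
    subregMod Fm xbar ybar = outerNormSV (svInv (gDeriv Fm xbar ybar)) := by
  refine le_antisymm (le_of_forall_gt_imp_ge_of_dense fun a ha => ?_)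
    (le_iInf₂ fun _ hκ => hκ.outerNormSV_le hgr)
  obtain ⟨κ, hκ, hκa⟩ := ENNReal.lt_iff_exists_nnreal_btwn.1 ha
  exact iInf₂_le_of_le κ (subregWith_of_outerNormSV_lt hgr hκ) hκa.le

theorem gDeriv_criterion_for_strong_subregularity_general [ProperSpace E] [ProperSpace F]
    (hgr : ybar ∈ Fm xbar) :
    ((∃ κ : ℝ≥0, SubregWith κ Fm xbar ybar) ↔ svInv (gDeriv Fm xbar ybar) 0 = {0}) ∧
    (svInv (gDeriv Fm xbar ybar) 0 = {0} ↔ outerNormSV (svInv (gDeriv Fm xbar ybar)) < ⊤) ∧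
    subregMod Fm xbar ybar = outerNormSV (svInv (gDeriv Fm xbar ybar)) := by
  have hfin : (∃ κ : ℝ≥0, SubregWith κ Fm xbar ybar) →
      outerNormSV (svInv (gDeriv Fm xbar ybar)) < ⊤ :=
    fun ⟨_, hκ⟩ => (hκ.outerNormSV_le hgr).trans_lt ENNReal.coe_lt_top
  have hzero : outerNormSV (svInv (gDeriv Fm xbar ybar)) < ⊤ →
      svInv (gDeriv Fm xbar ybar) 0 = {0} :=
    (posHomogeneous_svInv (posHomogeneous_gDeriv hgr)).apply_zero_eq_singleton
  exact ⟨⟨hzero ∘ hfin, exists_subregWith_of_svInv_gDeriv_zero_eq⟩,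
    ⟨hfin ∘ exists_subregWith_of_svInv_gDeriv_zero_eq, hzero⟩, subregMod_eq_outerNormSV hgr⟩

end StrongSubregularity

/-- Graphical derivative criterion for strong metric subregularity. -/
theorem gDeriv_criterion_for_strong_subregularity {n m : ℕ}
    (Fm : EuclideanSpace ℝ (Fin n) → Set (EuclideanSpace ℝ (Fin m)))
    (xbar : EuclideanSpace ℝ (Fin n)) (ybar : EuclideanSpace ℝ (Fin m))
    (hgr : ybar ∈ Fm xbar) (hloc : LocClosedAt (svGraph Fm) (xbar, ybar)) :
    ((∃ κ : ℝ≥0, SubregWith κ Fm xbar ybar) ↔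
      svInv (gDeriv Fm xbar ybar) 0 = {0}) ∧
    (svInv (gDeriv Fm xbar ybar) 0 = {0} ↔
      outerNormSV (svInv (gDeriv Fm xbar ybar)) < ⊤) ∧
    ((∃ κ : ℝ≥0, SubregWith κ Fm xbar ybar) →
      subregMod Fm xbar ybar = outerNormSV (svInv (gDeriv Fm xbar ybar))) := by
  obtain ⟨hzero, hfin, hmod⟩ :=
    gDeriv_criterion_for_strong_subregularity_general (Fm := Fm) hgr
  exact ⟨hzero, hfin, fun _ => hmod⟩

end
end

section
/- Let F : ℝⁿ ⇉ ℝᵐ be a set-valued map whose graph is closed around (x̄, ȳ) ∈ gph F (locally closed at (x̄,ȳ)). Then the following are equivalent: (a) F has the Aubin property at x̄ for ȳ; (b) |D*F(x̄|ȳ)|⁺ < ∞; (c) D*F(x̄|ȳ)(0) = {0}. Moreover, in this case lip(F; x̄|ȳ) = |D*F(x̄|ȳ)|⁺. -/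
open Filter Topology Set Metric RealInnerProductSpace
open scoped ENNReal NNReal Pointwise

noncomputable section

/-!
A positively homogeneous map with closed graph is bounded on the unit ball as soon as its value at
`0` is `{0}`: normalise the values and use compactness of the unit sphere. The same compactness
argument spreads a strict bound `|D*F(x̄|ȳ)|⁺ < a` on the coderivative at one point to a bound by
`a` on the Fréchet coderivatives at all nearby points of the graph.

The Aubin property with constant `κ` bounds every Fréchet coderivative nearby by `κ`: test a normal
`(w, -z)` against the points that the property provides over the ray `x + t • w`. Conversely, let
`a < κ`, where `a` bounds the nearby Fréchet coderivatives. Given `y₀ ∈ F x₀` and `x₁ ≠ x₀`, put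
`η = (κ - a) * ‖x₀ - x₁‖` and minimise `a * ‖u - x₁‖ + √(‖v - y₀‖ ^ 2 + η ^ 2)` over the points
`(u, v)` of the graph. By Fermat's rule a minimiser with `u ≠ x₁` would have a coderivative element
of norm `a` at some `z` with `‖z‖ < 1`, so `u = x₁`. The minimal value is at most the value
`κ * ‖x₀ - x₁‖` at `(x₀, y₀)` and dominates `‖v - y₀‖`, which is the Aubin inequality.
-/

lemma LocClosedAt.exists_isCompact_inter_closedBall {α : Type*} [PseudoMetricSpace α]
    [ProperSpace α] {s U : Set α} {p : α} (hs : LocClosedAt s p) (hU : U ∈ 𝓝 p) :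
    ∃ r, 0 < r ∧ IsCompact (s ∩ closedBall p r) ∧ closedBall p r ⊆ U := by
  obtain ⟨r₁, hr₁, hclosed⟩ := hs
  obtain ⟨r₂, hr₂, hsub⟩ := Metric.nhds_basis_closedBall.mem_iff.1 hU
  refine ⟨min r₁ r₂, lt_min hr₁ hr₂, ?_,
    (closedBall_subset_closedBall (min_le_right _ _)).trans hsub⟩
  rw [← inter_eq_self_of_subset_right (closedBall_subset_closedBall (min_le_left r₁ r₂)),
    ← inter_assoc]
  exact (isCompact_closedBall _ _).inter_left hclosed

section SetValuedMaps

variable {E F : Type*} [NormedAddCommGroup E] [NormedAddCommGroup F] {H : E → Set F}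

lemma outerNormSV_le_of_norm_le {κ : ℝ≥0} (h : ∀ x, ∀ y ∈ H x, ‖y‖ ≤ κ * ‖x‖) :
    outerNormSV H ≤ κ :=
  iSup₂_le fun x hx => iSup₂_le fun y hy =>
    ENNReal.coe_le_coe.2 <| (h x y hy).trans <| mul_le_of_le_one_right κ.2 hx

lemma norm_le_of_outerNormSV_le {κ : ℝ≥0} (h : outerNormSV H ≤ κ) {x : E} {y : F}
    (hx : ‖x‖ ≤ 1) (hy : y ∈ H x) : ‖y‖ ≤ κ := by
  have hle : (‖y‖₊ : ℝ≥0∞) ≤ outerNormSV H := le_iSup₂_of_le x hx <| le_iSup₂_of_le y hy le_rfl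
  exact_mod_cast hle.trans h

lemma exists_aubinWith_iff_lipMod_lt_top {x : E} {y : F} :
    (∃ κ : ℝ≥0, AubinWith κ H x y) ↔ lipMod H x y < ⊤ := by
  simp only [lipMod, iInf_lt_iff, ENNReal.coe_lt_top, exists_prop, and_true]

variable [NormedSpace ℝ E] [NormedSpace ℝ F]

lemma posHomogeneous_of_smul_mem (h0 : (0 : F) ∈ H 0)
    (hsmul : ∀ c : ℝ, 0 < c → ∀ x, ∀ y ∈ H x, c • y ∈ H (c • x)) : PosHomogeneous H := by
  refine ⟨h0, fun c hc x => Subset.antisymm (fun y hy => ?_) ?_⟩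
  · rw [mem_smul_set_iff_inv_smul_mem₀ hc.ne']
    simpa only [inv_smul_smul₀ hc.ne'] using hsmul c⁻¹ (inv_pos.2 hc) _ y hy
  · rintro _ ⟨y, hy, rfl⟩
    exact hsmul c hc x y hy

namespace PosHomogeneous

lemma smul_mem (hH : PosHomogeneous H) {c : ℝ} (hc : 0 < c) {x : E} {y : F} (hy : y ∈ H x) :
    c • y ∈ H (c • x) :=
  hH.2 c hc x ▸ smul_mem_smul_set hy

lemma outerNormSV_le_iff_s15 (hH : PosHomogeneous H) {κ : ℝ≥0} :
    outerNormSV H ≤ κ ↔ ∀ x, ∀ y ∈ H x, ‖y‖ ≤ κ * ‖x‖ := by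
  refine ⟨fun h x y hy => ?_, outerNormSV_le_of_norm_le⟩
  have hscaled : ∀ t > ‖x‖, ‖y‖ ≤ κ * t := fun t ht => by
    have ht0 : 0 < t := (norm_nonneg x).trans_lt ht
    have hx : ‖t⁻¹ • x‖ ≤ 1 := by
      rw [norm_smul_of_nonneg (inv_nonneg.2 ht0.le)]
      exact inv_mul_le_one_of_le₀ ht.le ht0.le
    have hy' := norm_le_of_outerNormSV_le h hx (hH.smul_mem (inv_pos.2 ht0) hy)
    rwa [norm_smul_of_nonneg (inv_nonneg.2 ht0.le), inv_mul_le_iff₀' ht0] at hy'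
  exact ge_of_tendsto ((continuous_const_mul (κ : ℝ)).continuousWithinAt (s := Ioi ‖x‖))
    (eventually_mem_nhdsWithin.mono hscaled)

lemma zero_eq_singleton_of_outerNormSV_lt_top (hH : PosHomogeneous H) (h : outerNormSV H < ⊤) :
    H 0 = {0} := by
  lift outerNormSV H to ℝ≥0 using h.ne with κ hκ
  refine eq_singleton_iff_unique_mem.2 ⟨hH.1, fun y hy => norm_le_zero_iff.1 ?_⟩
  simpa only [norm_zero, mul_zero] using hH.outerNormSV_le_iff_s15.1 hκ.ge 0 y hy

lemma outerNormSV_lt_top_of_zero_eq_singleton [ProperSpace F] (hH : PosHomogeneous H)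
    (hclosed : IsClosed (svGraph H)) (h0 : H 0 = {0}) : outerNormSV H < ⊤ := by
  have hunit : ∀ᶠ x in 𝓝 (0 : E), ∀ y ∈ sphere (0 : F) 1, y ∉ H x := by
    refine (isCompact_sphere 0 1).eventually_forall_of_forall_eventually fun y hy =>
      hclosed.isOpen_compl.mem_nhds fun hy0 : y ∈ H 0 => ?_
    rw [h0, mem_singleton_iff] at hy0
    simp [hy0] at hy
  obtain ⟨ε, hε, hball⟩ := Metric.eventually_nhds_iff_ball.1 hunit
  lift ε to ℝ≥0 using hε.le
  refine (outerNormSV_le_of_norm_le (κ := ε⁻¹) fun x y hy => ?_).trans_lt ENNReal.coe_lt_top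
  rcases eq_or_ne y 0 with rfl | hy0
  · rw [norm_zero]; positivity
  have hy_pos : 0 < ‖y‖⁻¹ := inv_pos.2 (norm_pos_iff.2 hy0)
  have hx : ‖y‖⁻¹ • x ∉ ball 0 (ε : ℝ) := fun hx =>
    hball _ hx _ (by simpa using norm_smul_inv_norm (𝕜 := ℝ) hy0) (hH.smul_mem hy_pos hy)
  rw [mem_ball_zero_iff, not_lt, norm_smul_of_nonneg hy_pos.le,
    le_inv_mul_iff₀' (norm_pos_iff.2 hy0)] at hx
  rwa [NNReal.coe_inv, le_inv_mul_iff₀ hε]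

lemma outerNormSV_lt_top_iff [ProperSpace F] (hH : PosHomogeneous H)
    (hclosed : IsClosed (svGraph H)) : outerNormSV H < ⊤ ↔ H 0 = {0} :=
  ⟨hH.zero_eq_singleton_of_outerNormSV_lt_top, hH.outerNormSV_lt_top_of_zero_eq_singleton hclosed⟩

end PosHomogeneous

end SetValuedMaps

section Normals

variable {X : Type*} [NormedAddCommGroup X] [InnerProductSpace ℝ X] {Ω : Set X} {p v : X}

lemma zero_mem_frechetNormalCone : (0 : X) ∈ frechetNormalCone Ω p := fun ε hε =>
  ⟨1, one_pos, fun q _ _ => by rw [inner_zero_left]; positivity⟩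

lemma smul_mem_frechetNormalCone (hv : v ∈ frechetNormalCone Ω p) {c : ℝ} (hc : 0 < c) :
    c • v ∈ frechetNormalCone Ω p := by
  intro ε hε
  obtain ⟨δ, hδ, hv⟩ := hv (ε / c) (div_pos hε hc)
  refine ⟨δ, hδ, fun q hq hqp => ?_⟩
  rw [real_inner_smul_left, ← le_div_iff₀' hc, mul_div_right_comm]
  exact hv q hq hqp

lemma mem_frechetNormalCone_iff : v ∈ frechetNormalCone Ω p ↔
    ∀ ε > 0, ∀ᶠ q in 𝓝[Ω] p, ⟪v, q - p⟫ ≤ ε * ‖q - p‖ := by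
  refine forall₂_congr fun ε _ => ?_
  simp only [eventually_nhdsWithin_iff, Metric.eventually_nhds_iff, dist_eq_norm]
  exact exists_congr fun δ => and_congr_right fun _ => forall_congr' fun q => imp.swap

lemma neg_mem_frechetNormalCone_of_isLocalMinOn {φ : X → ℝ} (hmin : IsLocalMinOn φ Ω p)
    (hφ : HasFDerivAt φ (innerSL ℝ v) p) : -v ∈ frechetNormalCone Ω p := by
  refine mem_frechetNormalCone_iff.2 fun ε hε => ?_
  filter_upwards [hmin, nhdsWithin_le_nhds (hφ.isLittleO.def hε)] with q hq hlin
  rw [innerSL_apply_apply] at hlin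
  rw [inner_neg_left]
  linarith [le_of_abs_le hlin]

lemma zero_mem_limitingNormalCone (hp : p ∈ Ω) : (0 : X) ∈ limitingNormalCone Ω p :=
  ⟨fun _ => p, fun _ => 0, fun _ => hp, tendsto_const_nhds, tendsto_const_nhds,
    fun _ => zero_mem_frechetNormalCone⟩

lemma smul_mem_limitingNormalCone (hv : v ∈ limitingNormalCone Ω p) {c : ℝ} (hc : 0 < c) :
    c • v ∈ limitingNormalCone Ω p := by
  obtain ⟨pk, vk, hpΩ, hp, hv, hN⟩ := hv
  exact ⟨pk, fun k => c • vk k, hpΩ, hp, hv.const_smul c,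
    fun k => smul_mem_frechetNormalCone (hN k) hc⟩

lemma mem_limitingNormalCone_iff_mem_closure : v ∈ limitingNormalCone Ω p ↔
    (p, v) ∈ closure {q : X × X | q.1 ∈ Ω ∧ q.2 ∈ frechetNormalCone Ω q.1} := by
  rw [mem_closure_iff_seq_limit]
  constructor
  · rintro ⟨pk, vk, hpΩ, hp, hv, hN⟩
    exact ⟨fun k => (pk k, vk k), fun k => ⟨hpΩ k, hN k⟩, hp.prodMk_nhds hv⟩
  · rintro ⟨qk, hq, hlim⟩
    exact ⟨fun k => (qk k).1, fun k => (qk k).2, fun k => (hq k).1, hlim.fst_nhds, hlim.snd_nhds,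
      fun k => (hq k).2⟩

lemma norm_le_of_eventually_inner_le {C : ℝ} (hC : 0 ≤ C)
    (h : ∀ᶠ q in 𝓝 p, ⟪v, q - p⟫ ≤ C * ‖q - p‖) : ‖v‖ ≤ C := by
  rcases eq_or_ne v 0 with rfl | hv
  · rwa [norm_zero]
  have hray : Tendsto (fun t : ℝ => p + t • v) (𝓝[>] 0) (𝓝 p) := by
    have hcont : Continuous fun t : ℝ => p + t • v := by fun_prop
    simpa using (hcont.tendsto 0).mono_left nhdsWithin_le_nhds
  obtain ⟨t, ht, ht0 : 0 < t⟩ := ((hray.eventually h).and self_mem_nhdsWithin).exists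
  rw [add_sub_cancel_left, real_inner_smul_right, real_inner_self_eq_norm_sq,
    norm_smul_of_nonneg ht0.le] at ht
  refine le_of_mul_le_mul_right ?_ (mul_pos ht0 (norm_pos_iff.2 hv))
  linarith

lemma hasFDerivAt_sqrt_norm_sub_sq_add_sq {a x : X} {η : ℝ} (h : ‖x - a‖ ^ 2 + η ^ 2 ≠ 0) :
    HasFDerivAt (fun u => √(‖u - a‖ ^ 2 + η ^ 2))
      (innerSL ℝ ((√(‖x - a‖ ^ 2 + η ^ 2))⁻¹ • (x - a))) x := by
  refine (((hasFDerivAt_id x).sub_const a).norm_sq.add_const (η ^ 2)).sqrt h |>.congr_fderiv ?_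
  ext u
  simp only [id_eq, one_div, mul_inv_rev, map_sub, ContinuousLinearMap.comp_id, smul_apply,
    sub_apply, coe_innerSL_apply, nsmul_eq_mul, Nat.cast_ofNat, smul_eq_mul, map_smul]
  ring

lemma hasFDerivAt_norm_sub {a x : X} (h : x ≠ a) :
    HasFDerivAt (fun u => ‖u - a‖) (innerSL ℝ (‖x - a‖⁻¹ • (x - a))) x := by
  simpa using hasFDerivAt_sqrt_norm_sub_sq_add_sq (a := a) (x := x) (η := 0)
    (by simpa using sub_ne_zero.2 h)

end Normals

section L2Product

variable {E F : Type*} [NormedAddCommGroup E] [NormedAddCommGroup F]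

lemma norm_toLp_prod_le (u : E) (v : F) : ‖WithLp.toLp 2 (u, v)‖ ≤ ‖u‖ + ‖v‖ := calc
  ‖WithLp.toLp 2 (u, v)‖ = ‖WithLp.toLp 2 (u, (0 : F)) + WithLp.toLp 2 ((0 : E), v)‖ := by
    rw [← WithLp.toLp_add, Prod.mk_add_mk, add_zero, zero_add]
  _ ≤ ‖u‖ + ‖v‖ := by
    simpa only [WithLp.norm_toLp_fst, WithLp.norm_toLp_snd] using
      norm_add_le (WithLp.toLp 2 (u, (0 : F))) (WithLp.toLp 2 ((0 : E), v))

end L2Product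

section SmoothedPenalty

variable {E F : Type*} [NormedAddCommGroup E] [NormedAddCommGroup F]
  {a η : ℝ} {x₀ x₁ : E} {y₀ : F} {q : E × F}

/-- The function minimised over the graph to find a point of `F x₁` close to `y₀`: an exact penalty
for the constraint `u = x₁` plus the distance to `y₀`, made differentiable by the parameter `η`. -/
def smoothedPenalty (a η : ℝ) (x₁ : E) (y₀ : F) (q : E × F) : ℝ :=
  a * ‖q.1 - x₁‖ + √(‖q.2 - y₀‖ ^ 2 + η ^ 2)

lemma continuous_smoothedPenalty : Continuous (smoothedPenalty a η x₁ y₀) := by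
  unfold smoothedPenalty
  fun_prop

lemma smoothedPenalty_apply_right (hη : 0 ≤ η) :
    smoothedPenalty a η x₁ y₀ (x₀, y₀) = a * ‖x₀ - x₁‖ + η := by
  rw [smoothedPenalty, sub_self, norm_zero, zero_pow two_ne_zero, zero_add, Real.sqrt_sq hη]

lemma add_norm_le_smoothedPenalty :
    a * ‖q.1 - x₁‖ + ‖q.2 - y₀‖ ≤ smoothedPenalty a η x₁ y₀ q :=
  add_le_add_right (Real.le_sqrt_of_sq_le (le_add_of_nonneg_right (sq_nonneg η))) _

lemma norm_snd_sub_le_smoothedPenalty (ha : 0 ≤ a) :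
    ‖q.2 - y₀‖ ≤ smoothedPenalty a η x₁ y₀ q :=
  (le_add_of_nonneg_left (by positivity)).trans add_norm_le_smoothedPenalty

lemma norm_fst_sub_le_smoothedPenalty (ha : 0 < a) :
    ‖q.1 - x₁‖ ≤ a⁻¹ * smoothedPenalty a η x₁ y₀ q := by
  rw [le_inv_mul_iff₀ ha]
  exact (le_add_of_nonneg_right (norm_nonneg _)).trans add_norm_le_smoothedPenalty

lemma mem_closedBall_of_smoothedPenalty_le (ha : 0 < a) {c : ℝ}
    (hq : smoothedPenalty a η x₁ y₀ q ≤ c) : q ∈ closedBall (x₁, y₀) (max 1 a⁻¹ * c) := by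
  have hsnd : ‖q.2 - y₀‖ ≤ c := (norm_snd_sub_le_smoothedPenalty ha.le).trans hq
  have hfst : ‖q.1 - x₁‖ ≤ a⁻¹ * c := (norm_fst_sub_le_smoothedPenalty ha).trans (by gcongr)
  rw [mem_closedBall, Prod.dist_eq, dist_eq_norm, dist_eq_norm,
    max_mul_of_nonneg _ _ ((norm_nonneg _).trans hsnd), one_mul]
  exact max_le (le_max_of_le_right hfst) (le_max_of_le_left hsnd)

end SmoothedPenalty

section Coderivatives

variable {E F : Type*} [NormedAddCommGroup E] [InnerProductSpace ℝ E]
  [NormedAddCommGroup F] [InnerProductSpace ℝ F] {Fm : E → Set F} {x : E} {y : F}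

/-- Fréchet (regular) coderivative: the counterpart of `coDeriv` built from Fréchet normals to the
graph, in the same `ℓ²` product. -/
def frechetCoDeriv (Fm : E → Set F) (x : E) (y : F) : F → Set E := fun z =>
  {w | WithLp.toLp 2 (w, -z) ∈
    frechetNormalCone (WithLp.toLp 2 '' svGraph Fm) (WithLp.toLp 2 (x, y))}

lemma smul_mem_frechetCoDeriv {w : E} {z : F} (hw : w ∈ frechetCoDeriv Fm x y z) {c : ℝ}
    (hc : 0 < c) : c • w ∈ frechetCoDeriv Fm x y (c • z) := by
  simpa [frechetCoDeriv, ← WithLp.toLp_smul] using smul_mem_frechetNormalCone hw hc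

lemma posHomogeneous_coDeriv (hy : y ∈ Fm x) : PosHomogeneous (coDeriv Fm x y) := by
  refine posHomogeneous_of_smul_mem ?_ fun c hc z w hw => ?_
  · have hgraph : (x, y) ∈ svGraph Fm := hy
    simpa [coDeriv, Prod.mk_zero_zero] using
      zero_mem_limitingNormalCone (mem_image_of_mem (WithLp.toLp 2) hgraph)
  · simpa [coDeriv, ← WithLp.toLp_smul] using smul_mem_limitingNormalCone hw hc

lemma isClosed_svGraph_coDeriv : IsClosed (svGraph (coDeriv Fm x y)) := by
  have hgraph : svGraph (coDeriv Fm x y) =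
      (fun q : F × E => (WithLp.toLp 2 (x, y), WithLp.toLp 2 (q.2, -q.1))) ⁻¹'
        closure {q | q.1 ∈ WithLp.toLp 2 '' svGraph Fm ∧
          q.2 ∈ frechetNormalCone (WithLp.toLp 2 '' svGraph Fm) q.1} :=
    Set.ext fun _ => mem_limitingNormalCone_iff_mem_closure
  rw [hgraph]
  exact isClosed_closure.preimage (by fun_prop)

lemma eventually_notMem_frechetCoDeriv {w : E} {z : F} (hw : w ∉ coDeriv Fm x y z) :
    ∀ᶠ q : (E × F) × (E × F) in 𝓝 ((x, y), (w, z)),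
      q.1 ∈ svGraph Fm → q.2.1 ∉ frechetCoDeriv Fm q.1.1 q.1.2 q.2.2 := by
  have hcont : Continuous fun q : (E × F) × (E × F) =>
      (WithLp.toLp 2 q.1, WithLp.toLp 2 (q.2.1, -q.2.2)) := by fun_prop
  filter_upwards [hcont.continuousAt.eventually (isClosed_closure.isOpen_compl.mem_nhds
    (mt mem_limitingNormalCone_iff_mem_closure.2 hw))] with q hq hgraph hN
  exact hq (subset_closure ⟨mem_image_of_mem _ hgraph, hN⟩)

lemma eventually_norm_le_of_outerNormSV_coDeriv_lt [ProperSpace E] [ProperSpace F] {a : ℝ≥0}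
    (hy : y ∈ Fm x) (ha : outerNormSV (coDeriv Fm x y) < a) :
    ∀ᶠ p in 𝓝 (x, y), p ∈ svGraph Fm →
      ∀ z, ∀ w ∈ frechetCoDeriv Fm p.1 p.2 z, ‖w‖ ≤ a * ‖z‖ := by
  obtain ⟨b, hb, hba⟩ := ENNReal.lt_iff_exists_nnreal_btwn.1 ha
  have hba : (b : ℝ) < a := by exact_mod_cast hba
  have ha0 : (0 : ℝ) < a := b.2.trans_lt hba
  have hunit : ∀ q ∈ sphere (0 : E) 1 ×ˢ closedBall (0 : F) (a : ℝ)⁻¹,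
      q.1 ∉ coDeriv Fm x y q.2 := by
    rintro ⟨w, z⟩ ⟨hw, hz⟩ hwz
    rw [mem_sphere_zero_iff_norm] at hw
    rw [mem_closedBall_zero_iff] at hz
    have : (1 : ℝ) < 1 := calc
      1 = ‖w‖ := hw.symm
      _ ≤ b * ‖z‖ := (posHomogeneous_coDeriv hy).outerNormSV_le_iff_s15.1 hb.le z w hwz
      _ ≤ b * (a : ℝ)⁻¹ := by gcongr
      _ < 1 := by rwa [← div_eq_mul_inv, div_lt_one ha0]
    exact this.false
  have hcompact := (isCompact_sphere (0 : E) 1).prod (isCompact_closedBall (0 : F) (a : ℝ)⁻¹)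
  filter_upwards [hcompact.eventually_forall_of_forall_eventually
    (P := fun p q => p ∈ svGraph Fm → q.1 ∉ frechetCoDeriv Fm p.1 p.2 q.2)
    fun q hq => eventually_notMem_frechetCoDeriv (hunit q hq)] with p hp hgraph z w hw
  by_contra! hlt
  have hw0 : 0 < ‖w‖ := lt_of_le_of_lt (by positivity) hlt
  refine hp (‖w‖⁻¹ • w, ‖w‖⁻¹ • z) ⟨?_, ?_⟩ hgraph (smul_mem_frechetCoDeriv hw (inv_pos.2 hw0))
  · simpa using norm_smul_inv_norm (𝕜 := ℝ) (norm_pos_iff.1 hw0)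
  · rw [mem_closedBall_zero_iff, norm_smul_of_nonneg (inv_nonneg.2 hw0.le), inv_mul_le_iff₀ hw0,
      le_mul_inv_iff₀' ha0]
    exact hlt.le

lemma norm_le_of_mem_frechetCoDeriv {w : E} {z : F} (hw : w ∈ frechetCoDeriv Fm x y z) {κ : ℝ}
    (hκ : 0 ≤ κ) (hF : ∀ᶠ x' in 𝓝 x, ∃ y' ∈ Fm x', ‖y - y'‖ ≤ κ * ‖x' - x‖) :
    ‖w‖ ≤ κ * ‖z‖ := by
  have hslack : ∀ ε > 0, ‖w‖ ≤ κ * ‖z‖ + ε * (1 + κ) := fun ε hε => by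
    obtain ⟨δ, hδ, hN⟩ := hw ε hε
    have hsmall : ∀ᶠ x' in 𝓝 x, (1 + κ) * ‖x' - x‖ < δ := by
      have hcont : Continuous fun x' => (1 + κ) * ‖x' - x‖ := by fun_prop
      exact hcont.continuousAt.eventually_lt_const (by simpa using hδ)
    refine norm_le_of_eventually_inner_le (p := x) (by positivity) ?_
    filter_upwards [hF, hsmall] with x' ⟨y', hy', hyy'⟩ hx'
    rw [norm_sub_rev] at hyy'
    have hnorm : ‖WithLp.toLp 2 (x', y') - WithLp.toLp 2 (x, y)‖ ≤ (1 + κ) * ‖x' - x‖ := calc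
      _ ≤ ‖x' - x‖ + ‖y' - y‖ := norm_toLp_prod_le (x' - x) (y' - y)
      _ ≤ (1 + κ) * ‖x' - x‖ := by linarith
    have hinner : ⟪w, x' - x⟫ - ⟪z, y' - y⟫ ≤
        ε * ‖WithLp.toLp 2 (x', y') - WithLp.toLp 2 (x, y)‖ := by
      simpa [WithLp.prod_inner_apply, ← sub_eq_add_neg] using
        hN _ (mem_image_of_mem _ hy') (hnorm.trans_lt hx')
    calc ⟪w, x' - x⟫
        ≤ ⟪z, y' - y⟫ + ε * ‖WithLp.toLp 2 (x', y') - WithLp.toLp 2 (x, y)‖ := by linarith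
      _ ≤ ‖z‖ * (κ * ‖x' - x‖) + ε * ((1 + κ) * ‖x' - x‖) := by
        gcongr
        exact (real_inner_le_norm _ _).trans (by gcongr)
      _ = (κ * ‖z‖ + ε * (1 + κ)) * ‖x' - x‖ := by ring
  refine le_of_forall_pos_le_add fun ε hε => ?_
  simpa [div_mul_cancel₀ ε (by positivity : 1 + κ ≠ 0)] using hslack (ε / (1 + κ)) (by positivity)

lemma AubinWith.norm_le_of_mem_coDeriv {κ : ℝ≥0} (hA : AubinWith κ Fm x y) {w : E} {z : F}
    (hw : w ∈ coDeriv Fm x y z) : ‖w‖ ≤ κ * ‖z‖ := by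
  obtain ⟨V, hV, U, hU, hA⟩ := hA
  obtain ⟨pk, vk, hgraph, hp, hv, hN⟩ := hw
  have hx : Tendsto (fun k => (pk k).fst) atTop (𝓝 x) :=
    ((WithLp.continuous_fst 2 E F).tendsto _).comp hp
  have hy : Tendsto (fun k => (pk k).snd) atTop (𝓝 y) :=
    ((WithLp.continuous_snd 2 E F).tendsto _).comp hp
  have hw : Tendsto (fun k => (vk k).fst) atTop (𝓝 w) :=
    ((WithLp.continuous_fst 2 E F).tendsto _).comp hv
  have hz : Tendsto (fun k => -(vk k).snd) atTop (𝓝 z) := by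
    simpa using (((WithLp.continuous_snd 2 E F).tendsto _).comp hv).neg
  have hcoderiv : ∀ k, (vk k).fst ∈ frechetCoDeriv Fm (pk k).fst (pk k).snd (-(vk k).snd) :=
    fun k => by
      rw [frechetCoDeriv, mem_ofPred_eq, neg_neg]
      exact hN k
  refine le_of_tendsto_of_tendsto hw.norm (hz.norm.const_mul _) ?_
  filter_upwards [hx.eventually (eventually_mem_nhds_iff.2 hV), hy.eventually hU] with k hxV hyU
  have hyk : (pk k).snd ∈ Fm (pk k).fst := by
    obtain ⟨q, hq, hqp⟩ := hgraph k
    rw [← hqp]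
    exact hq
  refine norm_le_of_mem_frechetCoDeriv (hcoderiv k) κ.2 ?_
  filter_upwards [hxV] with x' hx'
  exact hA x' hx' _ (mem_of_mem_nhds hxV) _ ⟨hyk, hyU⟩

lemma outerNormSV_coDeriv_le_lipMod : outerNormSV (coDeriv Fm x y) ≤ lipMod Fm x y :=
  le_iInf₂ fun _ hA => outerNormSV_le_of_norm_le fun _ _ => hA.norm_le_of_mem_coDeriv

lemma neg_mem_frechetCoDeriv_of_isLocalMinOn {φ : E → ℝ} {ψ : F → ℝ} {w : E} {z : F}
    (hmin : IsLocalMinOn (fun p : E × F => φ p.1 + ψ p.2) (svGraph Fm) (x, y))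
    (hφ : HasFDerivAt φ (innerSL ℝ w) x) (hψ : HasFDerivAt ψ (innerSL ℝ z) y) :
    -w ∈ frechetCoDeriv Fm x y z := by
  have hmin' : IsLocalMinOn (fun p : WithLp 2 (E × F) => φ p.fst + ψ p.snd)
      (WithLp.toLp 2 '' svGraph Fm) (WithLp.toLp 2 (x, y)) := by
    refine IsMinFilter.comp_tendsto (g := WithLp.ofLp) hmin ?_
    refine ContinuousWithinAt.tendsto_nhdsWithin (by fun_prop) ?_
    rintro _ ⟨p, hp, rfl⟩
    exact hp
  have hderiv : HasFDerivAt (fun p : WithLp 2 (E × F) => φ p.fst + ψ p.snd)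
      (innerSL ℝ (WithLp.toLp 2 (w, z))) (WithLp.toLp 2 (x, y)) := by
    have hfst := HasFDerivAt.comp (WithLp.toLp 2 (x, y)) hφ (WithLp.fstL 2 ℝ E F).hasFDerivAt
    have hsnd := HasFDerivAt.comp (WithLp.toLp 2 (x, y)) hψ (WithLp.sndL 2 ℝ E F).hasFDerivAt
    refine (hfst.add hsnd).congr_fderiv ?_
    ext p
    simp [WithLp.prod_inner_apply]
  exact neg_mem_frechetNormalCone_of_isLocalMinOn hmin' hderiv

lemma eq_of_isLocalMinOn_smoothedPenalty {x₁ : E} {y₀ : F} {a η : ℝ} (ha : 0 < a) (hη : 0 < η)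
    (hbound : ∀ z, ∀ w ∈ frechetCoDeriv Fm x y z, ‖w‖ ≤ a * ‖z‖)
    (hmin : IsLocalMinOn (smoothedPenalty a η x₁ y₀) (svGraph Fm) (x, y)) : x = x₁ := by
  by_contra hne
  have hφ : HasFDerivAt (fun u => a * ‖u - x₁‖) (innerSL ℝ (a • ‖x - x₁‖⁻¹ • (x - x₁))) x := by
    simpa only [map_smul] using (hasFDerivAt_norm_sub hne).const_mul a
  have hψ := hasFDerivAt_sqrt_norm_sub_sq_add_sq (a := y₀) (x := y) (η := η) (by positivity)
  have hle := hbound _ _ (neg_mem_frechetCoDeriv_of_isLocalMinOn hmin hφ hψ)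
  set s := √(‖y - y₀‖ ^ 2 + η ^ 2)
  have hs : ‖y - y₀‖ < s := Real.lt_sqrt_of_sq_lt (lt_add_of_pos_right _ (by positivity))
  have hs0 : 0 < s := (norm_nonneg _).trans_lt hs
  have hw : ‖-(a • ‖x - x₁‖⁻¹ • (x - x₁))‖ = a := by
    have hunit : ‖‖x - x₁‖⁻¹ • (x - x₁)‖ = 1 := norm_smul_inv_norm (𝕜 := ℝ) (sub_ne_zero.2 hne)
    rw [norm_neg, norm_smul_of_nonneg ha.le, hunit, mul_one]
  have hz : ‖s⁻¹ • (y - y₀)‖ < 1 := by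
    rwa [norm_smul_of_nonneg (inv_nonneg.2 hs0.le), inv_mul_lt_one₀ hs0]
  rw [hw] at hle
  exact (mul_lt_of_lt_one_right ha hz).not_ge hle

lemma exists_mem_norm_sub_le_of_frechetCoDeriv_bound {p : E × F} {a κ r : ℝ} (ha : 0 < a)
    (haκ : a < κ) (hK : IsCompact (svGraph Fm ∩ closedBall p r))
    (hbound : ∀ q ∈ svGraph Fm ∩ ball p r, ∀ z, ∀ w ∈ frechetCoDeriv Fm q.1 q.2 z, ‖w‖ ≤ a * ‖z‖)
    {x₀ x₁ : E} {y₀ : F} (hy₀ : y₀ ∈ Fm x₀)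
    (hball : closedBall (x₁, y₀) (max 1 a⁻¹ * (κ * ‖x₀ - x₁‖)) ⊆ ball p r) :
    ∃ y₁ ∈ Fm x₁, ‖y₀ - y₁‖ ≤ κ * ‖x₀ - x₁‖ := by
  rcases eq_or_ne x₀ x₁ with rfl | hne
  · exact ⟨y₀, hy₀, by simp⟩
  obtain ⟨η, hη_def⟩ : ∃ η, η = (κ - a) * ‖x₀ - x₁‖ := ⟨_, rfl⟩
  have hη : 0 < η := hη_def ▸ mul_pos (sub_pos.2 haκ) (norm_pos_iff.2 (sub_ne_zero.2 hne))
  have hstart : smoothedPenalty a η x₁ y₀ (x₀, y₀) = κ * ‖x₀ - x₁‖ := by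
    rw [smoothedPenalty_apply_right hη.le, hη_def]
    ring
  have hsublevel : ∀ q, smoothedPenalty a η x₁ y₀ q ≤ κ * ‖x₀ - x₁‖ → q ∈ ball p r :=
    fun q hq => hball (mem_closedBall_of_smoothedPenalty_le ha hq)
  have hmem : (x₀, y₀) ∈ svGraph Fm ∩ closedBall p r :=
    ⟨hy₀, ball_subset_closedBall (hsublevel _ hstart.le)⟩
  obtain ⟨⟨u, v⟩, ⟨hv, -⟩, hmin⟩ :=
    hK.exists_isMinOn ⟨_, hmem⟩ continuous_smoothedPenalty.continuousOn
  have hvalue : smoothedPenalty a η x₁ y₀ (u, v) ≤ κ * ‖x₀ - x₁‖ :=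
    (isMinOn_iff.1 hmin _ hmem).trans_eq hstart
  have hinterior : (u, v) ∈ ball p r := hsublevel _ hvalue
  have hlocal : IsLocalMinOn (smoothedPenalty a η x₁ y₀) (svGraph Fm) (u, v) := by
    have hlocal' := hmin.localize
    rwa [IsLocalMinOn, nhdsWithin_inter_of_mem' (mem_nhdsWithin_of_mem_nhds
      (closedBall_mem_nhds_of_mem hinterior))] at hlocal'
  have huv : ∀ z, ∀ w ∈ frechetCoDeriv Fm u v z, ‖w‖ ≤ a * ‖z‖ := hbound (u, v) ⟨hv, hinterior⟩
  obtain rfl : u = x₁ := eq_of_isLocalMinOn_smoothedPenalty ha hη huv hlocal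
  refine ⟨v, hv, ?_⟩
  rw [norm_sub_rev]
  exact (norm_snd_sub_le_smoothedPenalty ha.le).trans hvalue

lemma aubinWith_of_frechetCoDeriv_bound {a κ : ℝ≥0} {r : ℝ} (ha : 0 < a) (haκ : a < κ) (hr : 0 < r)
    (hK : IsCompact (svGraph Fm ∩ closedBall (x, y) r))
    (hbound : ∀ q ∈ svGraph Fm ∩ ball (x, y) r,
      ∀ z, ∀ w ∈ frechetCoDeriv Fm q.1 q.2 z, ‖w‖ ≤ a * ‖z‖) :
    AubinWith κ Fm x y := by
  set L : ℝ := max 1 (a : ℝ)⁻¹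
  set δ : ℝ := r / (2 * (L * κ) + 1)
  have hL : 0 ≤ L := zero_le_one.trans (le_max_left _ _)
  have hδ : 0 < δ := by positivity
  refine ⟨ball x δ, ball_mem_nhds x hδ, ball y δ, ball_mem_nhds y hδ, ?_⟩
  rintro x₁ hx₁ x₀ hx₀ y₀ ⟨hy₀, hy₀δ⟩
  rw [norm_sub_rev x₁]
  refine exists_mem_norm_sub_le_of_frechetCoDeriv_bound ha haκ hK hbound hy₀
    (closedBall_subset_ball' ?_)
  have hcenter : dist (x₁, y₀) (x, y) < δ := max_lt hx₁ hy₀δ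
  have hstep : ‖x₀ - x₁‖ ≤ 2 * δ := by
    rw [← dist_eq_norm]
    linarith [dist_triangle_right x₀ x₁ x, mem_ball.1 hx₁, mem_ball.1 hx₀]
  calc L * (κ * ‖x₀ - x₁‖) + dist (x₁, y₀) (x, y) < L * (κ * (2 * δ)) + δ :=
        add_lt_add_of_le_of_lt (by gcongr) hcenter
    _ = r := by simp only [δ]; field_simp

lemma aubinWith_of_outerNormSV_coDeriv_lt [ProperSpace E] [ProperSpace F] (hy : y ∈ Fm x)
    (hloc : LocClosedAt (svGraph Fm) (x, y)) {κ : ℝ≥0}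
    (h : outerNormSV (coDeriv Fm x y) < κ) : AubinWith κ Fm x y := by
  obtain ⟨a, ha, haκ⟩ := ENNReal.lt_iff_exists_nnreal_btwn.1 h
  obtain ⟨r, hr, hK, hbound⟩ := hloc.exists_isCompact_inter_closedBall
    (eventually_norm_le_of_outerNormSV_coDeriv_lt hy ha)
  exact aubinWith_of_frechetCoDeriv_bound (ENNReal.coe_pos.1 (zero_le.trans_lt ha))
    (ENNReal.coe_lt_coe.1 haκ) hr hK fun q hq => hbound (ball_subset_closedBall hq.2) hq.1

lemma lipMod_le_outerNormSV_coDeriv [ProperSpace E] [ProperSpace F] (hy : y ∈ Fm x)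
    (hloc : LocClosedAt (svGraph Fm) (x, y)) : lipMod Fm x y ≤ outerNormSV (coDeriv Fm x y) := by
  refine le_of_forall_gt fun b hb => ?_
  obtain ⟨κ, hκ, hκb⟩ := ENNReal.lt_iff_exists_nnreal_btwn.1 hb
  exact (iInf₂_le κ (aubinWith_of_outerNormSV_coDeriv_lt hy hloc hκ)).trans_lt hκb

theorem mordukhovich_criterion_general [FiniteDimensional ℝ E] [FiniteDimensional ℝ F]
    (hgr : y ∈ Fm x) (hloc : LocClosedAt (svGraph Fm) (x, y)) :
    ((∃ κ : ℝ≥0, AubinWith κ Fm x y) ↔ outerNormSV (coDeriv Fm x y) < ⊤) ∧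
    (outerNormSV (coDeriv Fm x y) < ⊤ ↔ coDeriv Fm x y 0 = {0}) ∧
    lipMod Fm x y = outerNormSV (coDeriv Fm x y) := by
  have hlip : lipMod Fm x y = outerNormSV (coDeriv Fm x y) :=
    (lipMod_le_outerNormSV_coDeriv hgr hloc).antisymm outerNormSV_coDeriv_le_lipMod
  exact ⟨hlip ▸ exists_aubinWith_iff_lipMod_lt_top,
    (posHomogeneous_coDeriv hgr).outerNormSV_lt_top_iff isClosed_svGraph_coDeriv, hlip⟩

end Coderivatives

/-- Mordukhovich criterion: point-based characterizations of the Aubin property. -/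
theorem mordukhovich_criterion {n m : ℕ}
    (Fm : EuclideanSpace ℝ (Fin n) → Set (EuclideanSpace ℝ (Fin m)))
    (xbar : EuclideanSpace ℝ (Fin n)) (ybar : EuclideanSpace ℝ (Fin m))
    (hgr : ybar ∈ Fm xbar) (hloc : LocClosedAt (svGraph Fm) (xbar, ybar)) :
    ((∃ κ : ℝ≥0, AubinWith κ Fm xbar ybar) ↔
      outerNormSV (coDeriv Fm xbar ybar) < ⊤) ∧
    (outerNormSV (coDeriv Fm xbar ybar) < ⊤ ↔
      coDeriv Fm xbar ybar 0 = {0}) ∧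
    ((∃ κ : ℝ≥0, AubinWith κ Fm xbar ybar) →
      lipMod Fm xbar ybar = outerNormSV (coDeriv Fm xbar ybar)) :=
  let ⟨hAubin, hzero, hlip⟩ := mordukhovich_criterion_general hgr hloc
  ⟨hAubin, hzero, fun _ => hlip⟩

end
end
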